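/- arXiv:2603.03110 — 10 statements merged into one kernel-verified Lean document; each statement's English description precedes it below -/
import Mathlib

section
/- Let b ≥ 3 and e ≥ 1 be integers, let j ∈ {1,...,b-1}, and for x > 0 let d_b(x) denote the leftmost digit of x in base b. Then for every real x > 0, d_b(x) = j if and only if d_{b^e}(x) ∈ S(b,e,j), where S(b,e,j) := ⋃_{ℓ=0}^{e-1} (b^ℓ·j + {0,...,b^ℓ - 1}). -/
/-!
Write `log_b x = n + f` with `n` an integer and `0 ≤ f < 1`, and divide with remainder:
`n = m * e + ℓ`, `0 ≤ ℓ < e`. Since `log_{b^e} x = (log_b x) / e` has integer part `m`, the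
base-`b^e` significand of `x` is `b ^ ℓ` times its base-`b` significand `b ^ f`
(`exists_leadingDigit_pow_div`). Taking integer parts, the base-`b` leading digit of `x` is the
leading base-`b` digit of the natural number `N = leadingDigit (b ^ e) x`, namely `N / b ^ ℓ`.
On the other hand `N ∈ digitSet b e j` says `N / b ^ ℓ' = j` for some `ℓ' < e`; as
`1 ≤ j < b`, this forces `ℓ' = Nat.log b N`, so `ℓ' = ℓ`.
-/

/-- The leftmost digit of `x > 0` in base-`b` positional notation (for `b ≥ 2`).
For `x > 0` and `b ≥ 2` this is the unique `j ∈ {1,...,b-1}` with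
`logb b x ∈ [logb b j, logb b (j+1)) + ℤ`. -/
noncomputable def leadingDigit (b : ℕ) (x : ℝ) : ℕ :=
  ⌊(b : ℝ) ^ Int.fract (Real.logb b x)⌋₊

/-- `S(b,e,j) := ⋃_{ℓ=0}^{e-1} (b^ℓ·j + {0,...,b^ℓ - 1})`. -/
def digitSet (b e j : ℕ) : Set ℕ :=
  {s | ∃ ℓ < e, ∃ r < b ^ ℓ, s = b ^ ℓ * j + r}

theorem leadingDigit_pos_lt (b : ℕ) (hb : 3 ≤ b) (x : ℝ) :
    1 ≤ leadingDigit b x ∧ leadingDigit b x < b := by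
  have hb1 : (1 : ℝ) < b := by exact_mod_cast (by omega : 1 < b)
  unfold leadingDigit
  constructor
  · exact Nat.le_floor (by
      simpa using Real.one_le_rpow hb1.le (Int.fract_nonneg (Real.logb b x)))
  · rw [Nat.floor_lt (by positivity)]
    simpa using Real.rpow_lt_rpow_of_exponent_lt hb1 (Int.fract_lt_one (Real.logb b x))

/-- Dropping the last `ℓ` base-`b` digits of the base-`b ^ e` leading digit, for a suitable
`ℓ < e`, leaves the base-`b` leading digit. -/
theorem exists_leadingDigit_pow_div (b e : ℕ) (hb : 3 ≤ b) (he : 1 ≤ e) (x : ℝ) :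
    ∃ ℓ < e, leadingDigit (b ^ e) x / b ^ ℓ = leadingDigit b x := by
  have hb0 : (0 : ℝ) < b := by exact_mod_cast (by omega : 0 < b)
  have he0 : (0 : ℝ) < e := by exact_mod_cast he
  have he' : (e : ℤ) ≠ 0 := by omega
  set L := Real.logb b x with hL
  have hlog : Real.logb ((b ^ e : ℕ) : ℝ) x = L / e := by
    rw [hL, Real.logb, Real.logb, Nat.cast_pow, Real.log_pow, div_div, mul_comm]
  have hfl : ⌊L / e⌋ = ⌊L⌋ / (e : ℤ) := by
    simpa using Int.floor_div_natCast L e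
  obtain ⟨ℓ, hℓ⟩ := Int.eq_ofNat_of_zero_le (Int.emod_nonneg ⌊L⌋ he')
  have hlt := Int.emod_lt_of_pos ⌊L⌋ (by omega : (0 : ℤ) < e)
  refine ⟨ℓ, by omega, ?_⟩
  have hexp : (e : ℝ) * Int.fract (L / e) = ℓ + Int.fract L := by
    have h := Int.mul_ediv_add_emod ⌊L⌋ e
    rw [hℓ, ← hfl] at h
    have h' : (e : ℝ) * ⌊L / e⌋ + ℓ = ⌊L⌋ := by exact_mod_cast h
    rw [Int.fract, Int.fract, mul_sub, mul_div_cancel₀ _ he0.ne']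
    linarith
  unfold leadingDigit
  -- `(b ^ e) ^ fract (L / e) = b ^ (ℓ + fract L) = b ^ ℓ * b ^ fract L`, and flooring commutes
  -- with division by the natural number `b ^ ℓ`.
  rw [hlog, Nat.cast_pow, ← Real.rpow_natCast_mul hb0.le, hexp, Real.rpow_add hb0,
    Real.rpow_natCast, ← Nat.floor_div_natCast, Nat.cast_pow,
    mul_div_cancel_left₀ _ (pow_pos hb0 ℓ).ne']

/-- The number of base-`b` digits of `N` following a nonzero leading digit `j` is determined
by `N`. -/
theorem log_eq_of_div_pow_eq {b N ℓ j : ℕ} (hj1 : 1 ≤ j) (hj2 : j < b)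
    (h : N / b ^ ℓ = j) : Nat.log b N = ℓ := by
  have hp : 0 < b ^ ℓ := Nat.pow_pos (by omega)
  apply Nat.log_eq_of_pow_le_of_lt_pow
  · have := (Nat.le_div_iff_mul_le hp).1 (h ▸ hj1 : 1 ≤ N / b ^ ℓ)
    omega
  · have := (Nat.div_lt_iff_lt_mul hp).1 (h ▸ hj2 : N / b ^ ℓ < b)
    rwa [pow_succ, mul_comm]

theorem stmt_0 (b e j : ℕ) (hb : 3 ≤ b) (he : 1 ≤ e) (hj1 : 1 ≤ j) (hj2 : j ≤ b - 1)
    (x : ℝ) (hx : 0 < x) :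
    leadingDigit b x = j ↔ leadingDigit (b ^ e) x ∈ digitSet b e j := by
  obtain ⟨ℓ, hℓ, hdiv⟩ := exists_leadingDigit_pow_div b e hb he x
  obtain ⟨h1, h2⟩ := leadingDigit_pos_lt b hb x
  constructor
  · rintro rfl
    refine ⟨ℓ, hℓ, leadingDigit (b ^ e) x % b ^ ℓ, Nat.mod_lt _ (Nat.pow_pos (by omega)), ?_⟩
    rw [← hdiv]
    exact (Nat.div_add_mod _ _).symm
  · rintro ⟨k, -, r, hr, hN⟩
    have hk : leadingDigit (b ^ e) x / b ^ k = j := by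
      rw [hN, Nat.mul_add_div (by omega), Nat.div_eq_of_lt hr, add_zero]
    have hkℓ : k = ℓ :=
      (log_eq_of_div_pow_eq hj1 (by omega) hk).symm.trans (log_eq_of_div_pow_eq h1 h2 hdiv)
    rw [← hdiv, ← hkℓ, hk]
end

section
/- Let b₁ and b₂ be distinct integers ≥ 3. Then ln b₁ and ln b₂ are rationally dependent if and only if there exist an integer a ≥ 2 and positive integers e₁, e₂ with gcd(e₁,e₂) = 1 such that b₁ = a^{e₁} and b₂ = a^{e₂}. -/
/-!
Since `log b₁ ≠ 0`, rational dependence means `log b₂ = q * log b₁` for some rational `q`, which is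
positive because both logarithms are. Writing `q = n / d` in lowest terms and exponentiating gives
`b₁ ^ n = b₂ ^ d` with `n`, `d` coprime, and comparing prime factorizations
(`Nat.exists_eq_pow_of_exponent_coprime_of_pow_eq_pow`) yields a common base `a` with `b₁ = a ^ d`,
`b₂ = a ^ n`. Conversely, `a ^ e₁` and `a ^ e₂` have logarithms in the rational ratio `e₂ / e₁`.
-/

theorem stmt_1 (b₁ b₂ : ℕ) (hb₁ : 3 ≤ b₁) (hb₂ : 3 ≤ b₂) (hne : b₁ ≠ b₂) :
    (¬ LinearIndependent ℚ ![Real.log b₁, Real.log b₂]) ↔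
      ∃ (a e₁ e₂ : ℕ), 2 ≤ a ∧ 0 < e₁ ∧ 0 < e₂ ∧ Nat.Coprime e₁ e₂ ∧
        b₁ = a ^ e₁ ∧ b₂ = a ^ e₂ := by
  have h₁ : 0 < Real.log b₁ := Real.log_pos (by exact_mod_cast (by omega : 1 < b₁))
  have h₂ : 0 < Real.log b₂ := Real.log_pos (by exact_mod_cast (by omega : 1 < b₂))
  rw [LinearIndependent.pair_iff' h₁.ne']
  push Not
  constructor
  · rintro ⟨q, hq⟩
    rw [Rat.smul_def] at hq
    have hq0 : 0 < q := by
      have : (0 : ℝ) < q := pos_of_mul_pos_left (hq ▸ h₂) h₁.le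
      exact_mod_cast this
    obtain ⟨n, hn⟩ := Int.eq_ofNat_of_zero_le (Rat.num_nonneg.mpr hq0.le)
    have hn0 : 0 < n := by
      have := Rat.num_pos.mpr hq0
      omega
    have hcop : n.Coprime q.den := by
      have := q.reduced
      rwa [hn, Int.natAbs_natCast] at this
    have hqn : (q : ℝ) * q.den = n := by
      have h : q * q.den = n := by
        rw [Rat.mul_den_eq_num, hn, Int.cast_natCast]
      exact_mod_cast h
    have hlog : n * Real.log b₁ = q.den * Real.log b₂ := by
      rw [← hq, ← hqn]
      ring
    have hpow : b₁ ^ n = b₂ ^ q.den := by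
      rw [← Real.log_pow, ← Real.log_pow] at hlog
      have := Real.log_injOn_pos (Set.mem_Ioi.mpr (by positivity))
        (Set.mem_Ioi.mpr (by positivity)) hlog
      exact_mod_cast this
    obtain ⟨a, ha₁, ha₂⟩ := Nat.exists_eq_pow_of_exponent_coprime_of_pow_eq_pow hcop hpow
    refine ⟨a, q.den, n, ?_, q.den_pos, hn0, hcop.symm, ha₁, ha₂⟩
    by_contra! ha
    -- A base `a ≤ 1` would force `b₁ = a ^ q.den ≤ 1`.
    have := Nat.pow_le_one_iff q.den_nz |>.mpr (by omega : a ≤ 1)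
    omega
  · rintro ⟨a, e₁, e₂, -, he₁, -, -, rfl, rfl⟩
    refine ⟨(e₂ : ℚ) / e₁, ?_⟩
    rw [Rat.smul_def]
    push_cast
    rw [Real.log_pow, Real.log_pow]
    field_simp
end

section
/- Let b₁ and b₂ be distinct integers ≥ 3 with b₁ = a^{e₁} and b₂ = a^{e₂} where a ≥ 2 is an integer and e₁, e₂ are positive coprime integers, and let d_B(x) := (d_{b₁}(x), d_{b₂}(x)) for x > 0. Then a pair (j₁,j₂) ∈ {1,...,b₁-1} × {1,...,b₂-1} lies in the image of d_B if and only if there exists an integer c such that j₁/(j₂+1) < a^c < (j₁+1)/j₂. -/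
/-- The leading digit in scale-invariant form, avoiding logarithms. The bounds `1 ≤ j < b` force `n`
to be the integer part of `logb b x`. -/
lemma leadingDigit_eq_iff {b j : ℕ} (hj : 1 ≤ j) (hjb : j < b) {x : ℝ} (hx : 0 < x) :
    leadingDigit b x = j ↔
      ∃ n : ℤ, (j : ℝ) * (b : ℝ) ^ n ≤ x ∧ x < ((j : ℝ) + 1) * (b : ℝ) ^ n := by
  have hb1 : (1 : ℝ) < b := by exact_mod_cast lt_of_le_of_lt hj hjb
  have hb0 : (0 : ℝ) < b := by linarith
  have hpow (m : ℤ) : (0 : ℝ) < (b : ℝ) ^ m := zpow_pos hb0 m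
  have key : (b : ℝ) ^ Int.fract (Real.logb b x) = x / (b : ℝ) ^ ⌊Real.logb b x⌋ := by
    rw [Int.fract, Real.rpow_sub hb0, Real.rpow_logb hb0 hb1.ne' hx, Real.rpow_intCast]
  rw [leadingDigit, key, Nat.floor_eq_iff (div_pos hx (hpow _)).le]
  constructor
  · rintro ⟨h1, h2⟩
    exact ⟨_, (le_div_iff₀ (hpow _)).1 h1, (div_lt_iff₀ (hpow _)).1 h2⟩
  · rintro ⟨n, h1, h2⟩
    have hfl : ⌊Real.logb b x⌋ = n := by
      have hj1 : (1 : ℝ) ≤ j := by exact_mod_cast hj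
      have hjb1 : (j : ℝ) + 1 ≤ b := by exact_mod_cast hjb
      rw [Int.floor_eq_iff]
      constructor
      · rw [Real.le_logb_iff_rpow_le hb1 hx, Real.rpow_intCast]
        nlinarith [hpow n]
      · rw [Real.logb_lt_iff_lt_rpow hb1 hx, Real.rpow_add hb0, Real.rpow_intCast, Real.rpow_one]
        nlinarith [hpow n]
    rw [hfl]
    exact ⟨(le_div_iff₀ (hpow _)).2 h1, (div_lt_iff₀ (hpow _)).2 h2⟩

theorem stmt_3 (a e₁ e₂ b₁ b₂ : ℕ) (ha : 2 ≤ a) (he₁ : 0 < e₁) (he₂ : 0 < e₂)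
    (hcop : Nat.Coprime e₁ e₂) (hb₁ : b₁ = a ^ e₁) (hb₂ : b₂ = a ^ e₂)
    (hb₁3 : 3 ≤ b₁) (hb₂3 : 3 ≤ b₂) (hne : b₁ ≠ b₂)
    (j₁ j₂ : ℕ) (hj₁ : 1 ≤ j₁) (hj₁' : j₁ ≤ b₁ - 1) (hj₂ : 1 ≤ j₂) (hj₂' : j₂ ≤ b₂ - 1) :
    (∃ x : ℝ, 0 < x ∧ leadingDigit b₁ x = j₁ ∧ leadingDigit b₂ x = j₂) ↔
      ∃ c : ℤ, (j₁ : ℝ) / (j₂ + 1) < (a : ℝ) ^ c ∧ (a : ℝ) ^ c < ((j₁ : ℝ) + 1) / j₂ := by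
  have hjb₁ : j₁ < b₁ := by omega
  have hjb₂ : j₂ < b₂ := by omega
  have ha0 : (0 : ℝ) < a := by exact_mod_cast (by omega : 0 < a)
  have hj₁0 : (0 : ℝ) < j₁ := by exact_mod_cast hj₁
  have hj₂0 : (0 : ℝ) < j₂ := by exact_mod_cast hj₂
  have hp₁ (n : ℤ) : (0 : ℝ) < (b₁ : ℝ) ^ n := zpow_pos (by exact_mod_cast (by omega : 0 < b₁)) n
  have hp₂ (n : ℤ) : (0 : ℝ) < (b₂ : ℝ) ^ n := zpow_pos (by exact_mod_cast (by omega : 0 < b₂)) n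
  have hpow (n₁ n₂ : ℤ) :
      (a : ℝ) ^ ((e₂ : ℤ) * n₂ - e₁ * n₁) = (b₂ : ℝ) ^ n₂ / (b₁ : ℝ) ^ n₁ := by
    rw [zpow_sub₀ ha0.ne', zpow_mul, zpow_mul, hb₁, hb₂]
    simp only [zpow_natCast, Nat.cast_pow]
  constructor
  · rintro ⟨x, hx, h1, h2⟩
    obtain ⟨n₁, h1, h1'⟩ := (leadingDigit_eq_iff hj₁ hjb₁ hx).1 h1
    obtain ⟨n₂, h2, h2'⟩ := (leadingDigit_eq_iff hj₂ hjb₂ hx).1 h2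
    refine ⟨(e₂ : ℤ) * n₂ - e₁ * n₁, ?_, ?_⟩
    · rw [hpow, div_lt_div_iff₀ (by positivity) (hp₁ _)]
      linarith
    · rw [hpow, div_lt_div_iff₀ (hp₁ _) hj₂0]
      linarith
  · rintro ⟨c, h1, h2⟩
    obtain ⟨n₁, n₂, rfl⟩ : ∃ n₁ n₂ : ℤ, c = (e₂ : ℤ) * n₂ - e₁ * n₁ := by
      obtain ⟨u, v, huv⟩ := Nat.isCoprime_iff_coprime.2 hcop
      exact ⟨-(u * c), v * c, by linear_combination -c * huv⟩
    rw [hpow, div_lt_div_iff₀ (by positivity) (hp₁ _)] at h1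
    rw [hpow, div_lt_div_iff₀ (hp₁ _) hj₂0] at h2
    have hq₁ := hp₁ n₁
    have hq₂ := hp₂ n₂
    -- Two overlapping half-open intervals share the larger of their left endpoints.
    have hx : 0 < max (j₁ * (b₁ : ℝ) ^ n₁) (j₂ * (b₂ : ℝ) ^ n₂) :=
      lt_max_of_lt_left (by positivity)
    refine ⟨_, hx, (leadingDigit_eq_iff hj₁ hjb₁ hx).2 ⟨n₁, le_max_left _ _, max_lt ?_ ?_⟩,
      (leadingDigit_eq_iff hj₂ hjb₂ hx).2 ⟨n₂, le_max_right _ _, max_lt ?_ ?_⟩⟩ <;> linarith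
end

section
/- Let b₁ and b₂ be distinct integers ≥ 3 such that ln b₁ and ln b₂ are rationally dependent, and let d_B(x) := (d_{b₁}(x), d_{b₂}(x)) for x > 0. Then the pair (2,3) is not in the image of d_B; in particular, d_B : ℝ₊ → {1,...,b₁-1} × {1,...,b₂-1} is not surjective. -/
theorem exists_scale (b : ℕ) (hb : 3 ≤ b) (x : ℝ) (hx : 0 < x) :
    ∃ (k : ℤ) (u : ℝ), 0 < u ∧ x = (b : ℝ) ^ k * u ∧ ⌊u⌋₊ = leadingDigit b x := by
  have hb0 : (0 : ℝ) < b := by positivity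
  have hb1 : (b : ℝ) ≠ 1 := by
    norm_cast
    omega
  refine ⟨⌊Real.logb b x⌋, (b : ℝ) ^ Int.fract (Real.logb b x), by positivity, ?_, rfl⟩
  rw [← Real.rpow_intCast, ← Real.rpow_add hb0, Int.floor_add_fract, Real.rpow_logb hb0 hb1 hx]

/-- A rational number with a positive power in `ℕ` is an integer, so it is not in `(1, 2)`. -/
theorem rat_not_between (s : ℚ) (q N : ℕ) (hq : q ≠ 0) (h : s ^ q = N) (h1 : 1 < s) (h2 : s < 2) :
    False := by
  have hd : s.den ^ q = 1 := by
    rw [← Rat.den_pow, h]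
    simp
  have hd1 : s.den = 1 := (Nat.pow_eq_one.1 hd).resolve_right hq
  have hs : ((s.num : ℤ) : ℚ) = s := Rat.den_eq_one_iff s |>.1 hd1
  rw [← hs] at h1 h2
  have h1' : 1 < s.num := by exact_mod_cast h1
  have h2' : s.num < 2 := by exact_mod_cast h2
  omega

theorem exists_rat_mul_log (b₁ b₂ : ℕ) (hb₁ : 3 ≤ b₁)
    (hdep : ¬ LinearIndependent ℚ ![Real.log b₁, Real.log b₂]) :
    ∃ r : ℚ, Real.log b₂ = r * Real.log b₁ := by
  have h1 : 0 < Real.log b₁ := Real.log_pos (by norm_cast; omega)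
  rw [LinearIndependent.pair_iff] at hdep
  push Not at hdep
  obtain ⟨s, t, hst, hne⟩ := hdep
  simp only [Rat.smul_def] at hst
  have ht : t ≠ 0 := by
    rintro rfl
    have hs : (s : ℝ) = 0 := by simpa [h1.ne'] using hst
    exact hne (by exact_mod_cast hs) rfl
  have ht' : (t : ℝ) ≠ 0 := by exact_mod_cast ht
  refine ⟨-s / t, ?_⟩
  push_cast
  field_simp
  linarith

theorem pair_two_three_not_mem (b₁ b₂ : ℕ) (hb₁ : 3 ≤ b₁) (hb₂ : 3 ≤ b₂)
    (hdep : ¬ LinearIndependent ℚ ![Real.log b₁, Real.log b₂]) :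
    ¬ ∃ x : ℝ, 0 < x ∧ leadingDigit b₁ x = 2 ∧ leadingDigit b₂ x = 3 := by
  rintro ⟨x, hx, hx1, hx2⟩
  obtain ⟨r, hr⟩ := exists_rat_mul_log b₁ b₂ hb₁ hdep
  obtain ⟨k, u, hu0, hu, hu'⟩ := exists_scale b₁ hb₁ x hx
  obtain ⟨m, v, hv0, hv, hv'⟩ := exists_scale b₂ hb₂ x hx
  rw [hx1, Nat.floor_eq_iff hu0.le] at hu'
  rw [hx2, Nat.floor_eq_iff hv0.le] at hv'
  norm_num at hu' hv'
  have hl1 : 0 < Real.log b₁ := Real.log_pos (by norm_cast; omega)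
  have hb1 : (0 : ℝ) < b₁ := by positivity
  have hb2 : (0 : ℝ) < b₂ := by positivity
  have hs : (b₁ : ℝ) ^ k / (b₂ : ℝ) ^ m = v / u := by
    rw [div_eq_div_iff (by positivity) hu0.ne', ← hu, hv, mul_comm]
  have hs1 : 1 < v / u := by
    rw [one_lt_div hu0]
    linarith
  have hs2 : v / u < 2 := by
    rw [div_lt_iff₀ hu0]
    linarith
  rw [← hs] at hs1 hs2
  have hq : (0 : ℝ) < r.den := by exact_mod_cast r.den_pos
  have hrq : (r : ℝ) * r.den = r.num := by exact_mod_cast Rat.mul_den_eq_num r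
  have hlog : r.den * Real.log ((b₁ : ℝ) ^ k / (b₂ : ℝ) ^ m)
      = ((k * r.den - m * r.num : ℤ) : ℝ) * Real.log b₁ := by
    rw [Real.log_div (by positivity) (by positivity), Real.log_zpow, Real.log_zpow, hr]
    push_cast
    rw [← hrq]
    ring
  have hpos : (0 : ℝ) < ((k * r.den - m * r.num : ℤ) : ℝ) := by
    have := mul_pos hq (Real.log_pos hs1)
    rw [hlog] at this
    exact pos_of_mul_pos_left this hl1.le
  obtain ⟨n, hn⟩ := Int.eq_ofNat_of_zero_le (Int.cast_pos.1 hpos).le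
  rw [hn] at hlog
  have hpow : ((b₁ : ℝ) ^ k / (b₂ : ℝ) ^ m) ^ r.den = (b₁ : ℝ) ^ n := by
    apply Real.log_injOn_pos (Set.mem_Ioi.2 (by positivity)) (Set.mem_Ioi.2 (by positivity))
    rw [Real.log_pow, hlog, Real.log_pow]
    simp
  have hc : (((b₁ : ℚ) ^ k / (b₂ : ℚ) ^ m : ℚ) : ℝ) = (b₁ : ℝ) ^ k / (b₂ : ℝ) ^ m := by
    push_cast
    rfl
  rw [← hc] at hpow hs1 hs2
  exact rat_not_between ((b₁ : ℚ) ^ k / (b₂ : ℚ) ^ m) r.den (b₁ ^ n) r.den_nz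
    (by exact_mod_cast hpow) (by exact_mod_cast hs1) (by exact_mod_cast hs2)

theorem stmt_4 (b₁ b₂ : ℕ) (hb₁ : 3 ≤ b₁) (hb₂ : 3 ≤ b₂) (hne : b₁ ≠ b₂)
    (hdep : ¬ LinearIndependent ℚ ![Real.log b₁, Real.log b₂]) :
    (¬ ∃ x : ℝ, 0 < x ∧ leadingDigit b₁ x = 2 ∧ leadingDigit b₂ x = 3) ∧
    ¬ (∀ j₁ j₂ : ℕ, 1 ≤ j₁ → j₁ ≤ b₁ - 1 → 1 ≤ j₂ → j₂ ≤ b₂ - 1 →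
        ∃ x : ℝ, 0 < x ∧ leadingDigit b₁ x = j₁ ∧ leadingDigit b₂ x = j₂) := by
  refine ⟨pair_two_three_not_mem b₁ b₂ hb₁ hb₂ hdep, fun h => ?_⟩
  by_cases h3 : b₂ = 3
  · have hdep' : ¬ LinearIndependent ℚ ![Real.log b₂, Real.log b₁] := by
      rwa [LinearIndependent.pair_symm_iff]
    obtain ⟨x, hx, h1, h2⟩ := h 3 2 (by omega) (by omega) (by omega) (by omega)
    exact pair_two_three_not_mem b₂ b₁ hb₂ hb₁ hdep' ⟨x, hx, h2, h1⟩
  · exact pair_two_three_not_mem b₁ b₂ hb₁ hb₂ hdep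
      (h 2 3 (by omega) (by omega) (by omega) (by omega))
end

section
/- Let b₁ and b₂ be distinct integers ≥ 3 such that ln b₁ and ln b₂ are rationally independent, and let d_B(x) := (d_{b₁}(x), d_{b₂}(x)) for x > 0. Then d_B : ℝ₊ → {1,...,b₁-1} × {1,...,b₂-1} is surjective; that is, for every pair (j₁,j₂) with 1 ≤ j₁ ≤ b₁-1 and 1 ≤ j₂ ≤ b₂-1 there exists x > 0 with d_{b₁}(x) = j₁ and d_{b₂}(x) = j₂. -/
lemma leadingDigit_exp (b j : ℕ) (hb : 3 ≤ b) (hj : 1 ≤ j) (hjb : j ≤ b - 1) (u : ℝ) (m : ℤ)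
    (h1 : Real.log j ≤ u) (h2 : u < Real.log (j + 1)) :
    leadingDigit b (Real.exp (u + m * Real.log b)) = j := by
  have hb' : (1 : ℝ) < b := by exact_mod_cast (by omega : 1 < b)
  have hL : 0 < Real.log b := Real.log_pos hb'
  have hj' : (1 : ℝ) ≤ j := by exact_mod_cast hj
  have hjb' : (j : ℝ) + 1 ≤ b := by exact_mod_cast (by omega : j + 1 ≤ b)
  have hu0 : 0 ≤ u := (Real.log_nonneg hj').trans h1
  have hub : u < Real.log b := h2.trans_le (Real.log_le_log (by linarith) hjb')
  have hlog : Real.logb b (Real.exp (u + m * Real.log b)) = u / Real.log b + m := by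
    rw [Real.logb, Real.log_exp]
    field_simp
  have hfr : Int.fract (u / Real.log b) = u / Real.log b :=
    Int.fract_eq_self.2 ⟨by positivity, (div_lt_one hL).2 hub⟩
  rw [leadingDigit, hlog, Int.fract_add_intCast, hfr, Real.rpow_def_of_pos (by linarith),
    mul_div_cancel₀ _ hL.ne', Nat.floor_eq_iff (Real.exp_pos u).le]
  exact ⟨(Real.log_le_iff_le_exp (by linarith)).1 h1,
    (Real.lt_log_iff_exp_lt (by linarith)).1 h2⟩

theorem stmt_6 (b₁ b₂ : ℕ) (hb₁ : 3 ≤ b₁) (hb₂ : 3 ≤ b₂) (hne : b₁ ≠ b₂)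
    (hind : LinearIndependent ℚ ![Real.log b₁, Real.log b₂]) :
    ∀ j₁ j₂ : ℕ, 1 ≤ j₁ → j₁ ≤ b₁ - 1 → 1 ≤ j₂ → j₂ ≤ b₂ - 1 →
      ∃ x : ℝ, 0 < x ∧ leadingDigit b₁ x = j₁ ∧ leadingDigit b₂ x = j₂ := by
  intro j₁ j₂ h1 h1' h2 h2'
  have hj₁ : (1 : ℝ) ≤ j₁ := by exact_mod_cast h1
  have hj₂ : (1 : ℝ) ≤ j₂ := by exact_mod_cast h2
  have hirr : Irrational (Real.log b₁ / Real.log b₂) := by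
    rintro ⟨q, hq⟩
    have hL : Real.log b₂ ≠ 0 :=
      (Real.log_pos (by exact_mod_cast (by omega : 1 < b₂))).ne'
    rw [eq_div_iff hL] at hq
    have h := LinearIndependent.pair_iff.1 hind 1 (-q) (by
      simp only [Rat.smul_def]
      push_cast
      linarith)
    exact one_ne_zero h.1
  have hlt₁ : Real.log j₁ < Real.log (j₁ + 1) := Real.log_lt_log (by linarith) (by linarith)
  have hlt₂ : Real.log j₂ < Real.log (j₂ + 1) := Real.log_lt_log (by linarith) (by linarith)
  obtain ⟨g, hg, hg1, hg2⟩ := (dense_addSubgroupClosure_pair_iff.2 hirr).exists_between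
    (sub_lt_sub_right hlt₁ (Real.log j₂))
  obtain ⟨m, n, rfl⟩ := AddSubgroup.mem_closure_pair.1 hg
  simp only [zsmul_eq_mul] at hg1 hg2
  refine ⟨Real.exp (Real.log j₂ + n * Real.log b₂), Real.exp_pos _, ?_,
    leadingDigit_exp b₂ j₂ hb₂ h2 h2' _ n le_rfl hlt₂⟩
  have key := leadingDigit_exp b₁ j₁ hb₁ h1 h1'
    (Real.log j₂ + (m * Real.log b₁ + n * Real.log b₂)) (-m) (by linarith) (by linarith)
  convert key using 3
  push_cast
  ring
end

section
/- Assume Schanuel's conjecture: for every m ≥ 1 and complex numbers c₁,...,cₘ that are linearly independent over ℚ, the field ℚ(c₁,...,cₘ, exp(c₁),...,exp(cₘ)) has transcendence degree at least m over ℚ. Then for any distinct prime numbers p₁,...,pₘ, the real numbers ln p₁,...,ln pₘ are algebraically independent over ℚ. -/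
/-!
By unique factorization, the logarithms of distinct primes are linearly independent over `ℚ`:
clearing denominators and exponentiating a relation gives `∏ pᵢ ^ gᵢ = 1` with integers `gᵢ`, and
the `pⱼ`-adic valuation reads off `gⱼ = 0`. Schanuel's conjecture applied to `cᵢ = log pᵢ` then
provides `m` algebraically independent numbers among the `log pᵢ` and the `exp (log pᵢ) = pᵢ`. The
latter are rational, hence cannot occur, so these `m` numbers are exactly `log p₁, ..., log pₘ`.
-/

/-- **Schanuel's conjecture** (for a finite family): if `c₁,...,cₘ` (`m ≥ 1`) are complex
numbers linearly independent over `ℚ`, then the field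
`ℚ(c₁,...,cₘ, exp c₁,...,exp cₘ)` has transcendence degree at least `m` over `ℚ`,
i.e. among the generators `c₁,...,cₘ, exp c₁,...,exp cₘ` there are `m` elements that are
algebraically independent over `ℚ`. -/
def SchanuelConjecture : Prop :=
  ∀ (m : ℕ), 1 ≤ m → ∀ c : Fin m → ℂ, LinearIndependent ℚ c →
    ∃ s : Finset ℂ, s.card = m ∧
      (↑s : Set ℂ) ⊆ Set.range c ∪ Set.range (fun i => Complex.exp (c i)) ∧
      AlgebraicIndependent ℚ (fun z : s => (z : ℂ))

theorem padicValRat_prod_zpow {ι : Type*} (q : ℕ) [Fact q.Prime] (s : Finset ι) (p : ι → ℕ)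
    (hp : ∀ i, p i ≠ 0) (g : ι → ℤ) :
    padicValRat q (∏ i ∈ s, (p i : ℚ) ^ g i) = ∑ i ∈ s, g i * padicValRat q (p i) := by
  classical
  induction s using Finset.induction_on with
  | empty => simp
  | insert a s ha ih =>
    have h : ∀ i, (p i : ℚ) ^ g i ≠ 0 := fun i => zpow_ne_zero _ (by exact_mod_cast hp i)
    rw [Finset.prod_insert ha, Finset.sum_insert ha,
      padicValRat.mul (h a) (Finset.prod_ne_zero_iff.2 fun i _ => h i), ih, padicValRat.zpow]

theorem linearIndependent_log_primes {m : ℕ} (p : Fin m → ℕ) (hp : ∀ i, (p i).Prime)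
    (hinj : Function.Injective p) : LinearIndependent ℚ (fun i => Real.log (p i)) := by
  rw [← LinearIndependent.iff_fractionRing ℤ ℚ, Fintype.linearIndependent_iff]
  intro g hg j
  have hpos : ∀ i, (0 : ℝ) < p i := fun i => by exact_mod_cast (hp i).pos
  have hR : (∏ i, (p i : ℝ) ^ g i) = 1 := by
    have h := congrArg Real.exp hg
    rw [Real.exp_sum, Real.exp_zero] at h
    rw [← h]
    refine Finset.prod_congr rfl fun i _ => ?_
    rw [zsmul_eq_mul, ← Real.rpow_intCast, Real.rpow_def_of_pos (hpos i), mul_comm]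
  have hQ : (∏ i, (p i : ℚ) ^ g i) = 1 := by
    apply Rat.cast_injective (α := ℝ)
    push_cast
    exact hR
  have := Fact.mk (hp j)
  have h := padicValRat_prod_zpow (p j) Finset.univ p (fun i => (hp i).ne_zero) g
  rw [hQ, padicValRat.one, Finset.sum_eq_single j] at h
  · rw [padicValRat.self (hp j).one_lt, mul_one] at h
    exact h.symm
  · intro i _ hij
    have := Fact.mk (hp i)
    rw [padicValRat.of_nat, padicValNat_primes (fun h => hij (hinj h.symm))]
    simp
  · simp

theorem stmt_9 (hschanuel : SchanuelConjecture)
    (m : ℕ) (p : Fin m → ℕ) (hp : ∀ i, (p i).Prime) (hinj : Function.Injective p) :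
    AlgebraicIndependent ℚ (fun i => Real.log (p i)) := by
  classical
  rcases Nat.eq_zero_or_pos m with rfl | hm
  · rw [algebraicIndependent_empty_type_iff]
    exact (algebraMap ℚ ℝ).injective
  let f : ℝ →ₐ[ℚ] ℂ := Complex.ofRealAm.restrictScalars ℚ
  have hf : Function.Injective f := Complex.ofReal_injective
  let c : Fin m → ℂ := fun i => f (Real.log (p i))
  have hlin : LinearIndependent ℚ c :=
    (linearIndependent_log_primes p hp hinj).map' f.toLinearMap (LinearMap.ker_eq_bot.2 hf)
  have hexp : ∀ i, Complex.exp (c i) = p i := fun i => by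
    change Complex.exp ((Real.log (p i) : ℝ) : ℂ) = p i
    rw [← Complex.ofReal_exp, Real.exp_log (by exact_mod_cast (hp i).pos), Complex.ofReal_natCast]
  obtain ⟨s, hcard, hsub, hs⟩ := hschanuel m hm c hlin
  -- A member of `s` of the form `exp (c i)` would be both algebraic and transcendental.
  have hsc : s ⊆ Finset.univ.image c := by
    intro z hz
    rcases hsub hz with ⟨i, hi⟩ | ⟨i, hi⟩
    · exact Finset.mem_image.2 ⟨i, Finset.mem_univ i, hi⟩
    · refine absurd ?_ (hs.transcendental ⟨z, hz⟩)
      change IsAlgebraic ℚ z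
      rw [← hi]
      change IsAlgebraic ℚ (Complex.exp (c i))
      rw [hexp]
      exact isAlgebraic_natCast (p i)
  have hseq : s = Finset.univ.image c :=
    Finset.eq_of_subset_of_card_le hsc (by
      rw [hcard]; exact Finset.card_image_le.trans (by simp))
  have hmem : ∀ i, c i ∈ s := fun i => by
    rw [hseq]; exact Finset.mem_image_of_mem c (Finset.mem_univ i)
  have hc : AlgebraicIndependent ℚ c :=
    hs.comp (fun i => (⟨c i, hmem i⟩ : s)) fun i j h =>
      hlin.injective (congrArg Subtype.val h)
  exact AlgebraicIndependent.of_comp f hc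
end

section
/- Let b₁,...,bₙ be integers ≥ 3 such that no pair of numbers among ln b₁,...,ln bₙ is rationally dependent, and let p₁,...,pₘ be the distinct primes dividing b₁⋯bₙ. If ln p₁,...,ln pₘ are algebraically independent over ℚ, then the real numbers 1/ln b₁,...,1/ln bₙ are rationally independent (linearly independent over ℚ). -/
/-!
Write `log (b i) = ∑ k, v i k * log (p k)`, where `v i k` is the exponent of `p k` in `b i`, and let
`L i = ∑ k, v i k * X k` be the corresponding linear form. A rational relation `∑ c i / log (b i) = 0`,
after clearing denominators, says that the polynomial `∑ i, c i * ∏ j ≠ i, L j` vanishes at the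
algebraically independent point `(log (p k))`, so it is the zero polynomial.
The forms `L i` are pairwise linearly independent because the `log (b i)` are, so no hyperplane
`L j = 0` with `j ≠ i` contains the hyperplane `L i = 0`. A vector space over an infinite field is not
a finite union of proper subspaces, so some rational point `x` satisfies `L i x = 0` and `L j x ≠ 0`
for all `j ≠ i`. Evaluating the zero polynomial at `x` leaves `c i * ∏ j ≠ i, L j x = 0`, so `c i = 0`.
-/

/-- Expansion of `log N` over any injective family of naturals containing the prime divisors of `N`; members
of the family that are not prime divisors of `N` contribute zero. -/
lemma log_eq_sum_of_primes {m : ℕ} (p : Fin m → ℕ) (hpinj : Function.Injective p)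
    (N : ℕ) (h : ∀ q : ℕ, q.Prime → q ∣ N → ∃ k, p k = q) :
    Real.log N = ∑ k, (N.factorization (p k) : ℝ) * Real.log (p k) := by
  classical
  rw [Real.log_nat_eq_sum_factorization, Finsupp.sum]
  rw [← Finset.sum_image (s := Finset.univ) (g := p)
    (f := fun q : ℕ => (N.factorization q : ℝ) * Real.log q) (fun a _ b _ hab => hpinj hab)]
  apply Finset.sum_subset
  · intro q hq
    rw [Nat.support_factorization, Nat.mem_primeFactors] at hq
    obtain ⟨k, hk⟩ := h q hq.1 hq.2.1
    exact Finset.mem_image.2 ⟨k, Finset.mem_univ _, hk⟩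
  · intro q _ hq
    simp [Finsupp.notMem_support_iff.1 hq]

/-- Pairwise independent linear forms: on the kernel of any one of them there is a point where all the
others are nonzero. -/
lemma exists_separating_point {V : Type*} [AddCommGroup V] [Module ℚ V] {n : ℕ}
    (L : Fin n → Module.Dual ℚ V)
    (hL : ∀ i j, i ≠ j → LinearIndependent ℚ ![L i, L j]) (i : Fin n) :
    ∃ x, L i x = 0 ∧ ∀ j, j ≠ i → L j x ≠ 0 := by
  obtain ⟨x, hx, hx'⟩ := Module.Dual.exists_forall_mem_ne_zero_of_forall_exists
    (LinearMap.ker (L i)) (fun j : {j // j ≠ i} => L j) (by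
      rintro ⟨j, hj⟩
      by_contra! hcon
      have hmem : L j ∈ Submodule.span ℚ (Set.range fun _ : Unit => L i) := by
        apply mem_span_of_iInf_ker_le_ker
        intro v hv
        exact hcon v (by simpa using hv)
      rw [Set.range_const, Submodule.mem_span_singleton] at hmem
      obtain ⟨a, ha⟩ := hmem
      have h1 := LinearIndependent.pair_iff.1 (hL i j hj.symm) a (-1) (by simp [ha])
      exact absurd h1.2 (by norm_num))
  exact ⟨x, hx, fun j hj => hx' ⟨j, hj⟩⟩

theorem stmt_10 (n : ℕ) (b : Fin n → ℕ) (hb : ∀ i, 3 ≤ b i)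
    (hpair : ∀ i j : Fin n, i ≠ j → LinearIndependent ℚ ![Real.log (b i), Real.log (b j)])
    (m : ℕ) (p : Fin m → ℕ) (hp : ∀ k, (p k).Prime) (hpinj : Function.Injective p)
    (hdiv : ∀ q : ℕ, q.Prime → ((q ∣ ∏ i, b i) ↔ ∃ k, p k = q))
    (halg : AlgebraicIndependent ℚ (fun k => Real.log (p k))) :
    LinearIndependent ℚ (fun i => 1 / Real.log (b i)) := by
  classical
  set v : Fin n → Fin m → ℚ := fun i k => ((b i).factorization (p k) : ℚ) with hv
  have hlog : ∀ i, Real.log (b i) = ∑ k, (v i k : ℝ) * Real.log (p k) := by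
    intro i
    have := log_eq_sum_of_primes p hpinj (b i) (fun q hq hqb =>
      (hdiv q hq).1 (hqb.trans (Finset.dvd_prod_of_mem b (Finset.mem_univ i))))
    simpa [hv] using this
  have hpos : ∀ i, Real.log (b i) ≠ 0 := fun i =>
    (Real.log_pos (by exact_mod_cast (by have := hb i; omega : 1 < b i))).ne'
  let L : Fin n → Module.Dual ℚ (Fin m → ℚ) := fun i => ∑ k, v i k • LinearMap.proj k
  have hLapp : ∀ i x, L i x = ∑ k, v i k * x k := by
    intro i x; simp [L]
  have hL : ∀ i j, i ≠ j → LinearIndependent ℚ ![L i, L j] := by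
    intro i j hij
    rw [LinearIndependent.pair_iff]
    intro s t hst
    refine LinearIndependent.pair_iff.1 (hpair i j hij) s t ?_
    have hco : ∀ k, s * v i k + t * v j k = 0 := by
      intro k
      have := LinearMap.congr_fun hst (Pi.single k 1)
      simpa [hLapp, Pi.single_apply] using this
    rw [hlog, hlog, Rat.smul_def, Rat.smul_def, Finset.mul_sum, Finset.mul_sum,
      ← Finset.sum_add_distrib]
    refine Finset.sum_eq_zero fun k _ => ?_
    have : (s : ℝ) * v i k + t * v j k = 0 := by exact_mod_cast hco k
    linear_combination Real.log (p k) * this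
  rw [Fintype.linearIndependent_iff]
  intro c hc i
  let F : Fin n → MvPolynomial (Fin m) ℚ := fun i =>
    ∑ k, MvPolynomial.C (v i k) * MvPolynomial.X k
  have hF : ∀ i, MvPolynomial.aeval (fun k => Real.log (p k)) (F i) = Real.log (b i) := by
    intro i; simp [F, hlog]
  have hF' : ∀ i x, MvPolynomial.eval x (F i) = L i x := by
    intro i x; simp [F, hLapp]
  let P : MvPolynomial (Fin m) ℚ :=
    ∑ i, MvPolynomial.C (c i) * ∏ j ∈ Finset.univ.erase i, F j
  have hP : P = 0 := by
    apply (injective_iff_map_eq_zero _).1 halg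
    have h1 : MvPolynomial.aeval (fun k => Real.log (p k)) P
        = (∑ i, c i • (1 / Real.log (b i))) * ∏ j, Real.log (b j) := by
      simp only [P, map_sum, map_mul, map_prod, hF, Finset.sum_mul]
      refine Finset.sum_congr rfl fun i _ => ?_
      rw [← Finset.mul_prod_erase _ _ (Finset.mem_univ i), Rat.smul_def]
      have := hpos i
      simp
      field_simp
    rw [h1, hc, zero_mul]
  obtain ⟨x, hx, hx'⟩ := exists_separating_point L hL i
  have h2 : MvPolynomial.eval x P = c i * ∏ j ∈ Finset.univ.erase i, L j x := by
    simp only [P, map_sum, map_mul, map_prod, hF', MvPolynomial.eval_C]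
    refine Finset.sum_eq_single i (fun l _ hl => ?_) (by simp)
    -- for `l ≠ i` the product over `j ≠ l` contains the vanishing factor `L i x`
    rw [Finset.prod_eq_zero (Finset.mem_erase.2 ⟨hl.symm, Finset.mem_univ i⟩) hx, mul_zero]
  rw [hP, map_zero] at h2
  refine (mul_eq_zero.1 h2.symm).resolve_right ?_
  exact Finset.prod_ne_zero_iff.2 fun j hj => hx' j (Finset.ne_of_mem_erase hj)
end

section
/- Let n ≥ 2 and let B = (b₁,...,bₙ) have distinct integer entries ≥ 3, with d_B(x) := (d_{b₁}(x),...,d_{bₙ}(x)) for x > 0. If some pair of numbers among ln b₁,...,ln bₙ is rationally dependent, then d_B : ℝ₊ → {1,...,b₁-1} × ⋯ × {1,...,bₙ-1} is not surjective. Equivalently, if d_B is surjective, then ln b_i and ln b_j are rationally independent whenever i ≠ j. -/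
lemma exists_common_base {a b : ℕ} (ha : 3 ≤ a) (hb : 3 ≤ b)
    (h : ¬ LinearIndependent ℚ ![Real.log a, Real.log b]) :
    ∃ c p q : ℕ, a = c ^ p ∧ b = c ^ q := by
  have ha1 : (1 : ℝ) < a := by exact_mod_cast (by omega : 1 < a)
  have hb1 : (1 : ℝ) < b := by exact_mod_cast (by omega : 1 < b)
  have hla := Real.log_pos ha1
  have hlb := Real.log_pos hb1
  rw [LinearIndependent.pair_iff' hla.ne'] at h
  push Not at h
  obtain ⟨r, hr⟩ := h
  rw [Rat.smul_def] at hr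
  have hr0 : 0 < r := by
    have : (0 : ℝ) < r := by
      by_contra hneg
      nlinarith
    exact_mod_cast this
  have hnum : 0 < r.num := Rat.num_pos.mpr hr0
  obtain ⟨m, hm⟩ := Int.eq_ofNat_of_zero_le hnum.le
  have hden : (0 : ℝ) < r.den := by exact_mod_cast r.den_pos
  have hrm : (r : ℝ) * r.den = m := by
    have h1 : r * r.den = (m : ℚ) := by rw [Rat.mul_den_eq_num, hm]; simp
    exact_mod_cast h1
  have hlog : Real.log ((a : ℝ) ^ m) = Real.log ((b : ℝ) ^ r.den) := by
    rw [Real.log_pow, Real.log_pow, ← hr, ← hrm]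
    ring
  have hpow : (a : ℝ) ^ m = (b : ℝ) ^ r.den :=
    Real.log_injOn_pos (Set.mem_Ioi.mpr (by positivity)) (Set.mem_Ioi.mpr (by positivity)) hlog
  obtain ⟨c, h1, h2⟩ :=
    Nat.exists_eq_pow_of_pow_eq_pow (Or.inr r.den_nz) (by exact_mod_cast hpow : a ^ m = b ^ r.den)
  exact ⟨c, _, _, h1, h2⟩

lemma leadingDigit_range {c p j : ℕ} (hcp : 1 < c ^ p) {x : ℝ} (hx : 0 < x)
    (h : leadingDigit (c ^ p) x = j) :
    ∃ M : ℤ, (j : ℝ) * (c : ℝ) ^ M ≤ x ∧ x < (j + 1) * (c : ℝ) ^ M := by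
  have hb : (1 : ℝ) < ((c ^ p : ℕ) : ℝ) := by exact_mod_cast hcp
  set b : ℝ := ((c ^ p : ℕ) : ℝ) with hbdef
  have hb0 : 0 < b := by linarith
  have hfl : b ^ Int.fract (Real.logb b x) = x / b ^ ⌊Real.logb b x⌋ := by
    rw [← Int.self_sub_floor, Real.rpow_sub hb0, Real.rpow_logb hb0 hb.ne' hx, Real.rpow_intCast]
  unfold leadingDigit at h
  rw [← hbdef, hfl] at h
  have hz : 0 < b ^ ⌊Real.logb b x⌋ := zpow_pos hb0 _
  rw [Nat.floor_eq_iff (by positivity), le_div_iff₀ hz, div_lt_iff₀ hz] at h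
  refine ⟨p * ⌊Real.logb b x⌋, ?_⟩
  rw [zpow_mul, zpow_natCast]
  simpa [hbdef] using h

lemma digits_incompatible {c d : ℕ} (hc : 2 ≤ c) (hd : d + 2 ≤ c * d) {x : ℝ} {M N : ℤ}
    (hM : (d : ℝ) * (c : ℝ) ^ M ≤ x) (hM' : x < (d + 1) * (c : ℝ) ^ M)
    (hN : ((d : ℝ) + 1) * (c : ℝ) ^ N ≤ x) (hN' : x < ((d : ℝ) + 1 + 1) * (c : ℝ) ^ N) :
    False := by
  have hc1 : (1 : ℝ) ≤ c := by exact_mod_cast (by omega : 1 ≤ c)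
  have hc0 : (0 : ℝ) < c := by linarith
  rcases le_or_gt M N with h | h
  · have := zpow_le_zpow_right₀ hc1 h
    nlinarith [Nat.cast_nonneg (α := ℝ) d]
  · have h1 : (c : ℝ) ^ (N + 1) ≤ (c : ℝ) ^ M := zpow_le_zpow_right₀ hc1 h
    rw [zpow_add_one₀ hc0.ne'] at h1
    have h2 : (d : ℝ) + 2 ≤ c * d := by exact_mod_cast hd
    have h3 := mul_le_mul_of_nonneg_left h1 (Nat.cast_nonneg (α := ℝ) d)
    have h4 := mul_le_mul_of_nonneg_right h2 (zpow_pos hc0 N).le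
    nlinarith

/-- The digits `d` and `d + 1` must be admissible in both bases; `d = 2` is available for `c = 2`
because a power of `2` that is at least `3` is at least `4`. -/
lemma exists_digit {c p q : ℕ} (hp : 3 ≤ c ^ p) (hq : 3 ≤ c ^ q) :
    2 ≤ c ∧ ∃ d : ℕ, 1 ≤ d ∧ d + 2 ≤ c * d ∧ d + 1 ≤ c ^ p - 1 ∧ d + 1 ≤ c ^ q - 1 := by
  have hc : 2 ≤ c := by
    by_contra! hlt
    have := pow_le_one₀ (n := p) (Nat.zero_le c) (by omega : c ≤ 1)
    omega
  refine ⟨hc, ?_⟩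
  rcases hc.eq_or_lt with rfl | hc3
  · have key : ∀ r : ℕ, 3 ≤ 2 ^ r → 4 ≤ 2 ^ r := by
      intro r hr
      rcases r with _ | r
      · omega
      · rw [pow_succ] at *
        omega
    have := key p hp
    have := key q hq
    exact ⟨2, by omega, by omega, by omega, by omega⟩
  · exact ⟨1, by omega, by omega, by omega, by omega⟩

theorem stmt_11 (n : ℕ) (hn : 2 ≤ n) (b : Fin n → ℕ) (hb : ∀ i, 3 ≤ b i)
    (hinj : Function.Injective b)
    (hdep : ∃ i j : Fin n, i ≠ j ∧ ¬ LinearIndependent ℚ ![Real.log (b i), Real.log (b j)]) :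
    ¬ (∀ j : Fin n → ℕ, (∀ i, 1 ≤ j i ∧ j i ≤ b i - 1) →
        ∃ x : ℝ, 0 < x ∧ ∀ i, leadingDigit (b i) x = j i) := by
  intro hsurj
  obtain ⟨s, t, hst, hdep⟩ := hdep
  obtain ⟨c, p, q, hs, ht⟩ := exists_common_base (hb s) (hb t) hdep
  have hbs := hb s
  have hbt := hb t
  obtain ⟨hc, d, hd1, hd, hdp, hdq⟩ := exists_digit (hs ▸ hbs) (ht ▸ hbt)
  obtain ⟨x, hx, hdig⟩ := hsurj (fun k => if k = s then d else if k = t then d + 1 else 1) (by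
    intro k
    have := hb k
    split_ifs with h1 h2
    · subst h1; omega
    · subst h2; omega
    · omega)
  have h1 := hdig s
  have h2 := hdig t
  simp only [if_true, hst.symm, if_false] at h1 h2
  rw [hs] at h1 hbs
  rw [ht] at h2 hbt
  obtain ⟨M, hM, hM'⟩ := leadingDigit_range (by omega) hx h1
  obtain ⟨N, hN, hN'⟩ := leadingDigit_range (by omega) hx h2
  push_cast at hN hN'
  exact digits_incompatible hc hd hM hM' hN hN'
end

section
/- Let n ≥ 2 and let B = (b₁,...,bₙ) have distinct integer entries ≥ 3, with d_B(x) := (d_{b₁}(x),...,d_{bₙ}(x)) for x > 0. If the real numbers 1/ln b₁,...,1/ln bₙ are rationally independent, then d_B : ℝ₊ → {1,...,b₁-1} × ⋯ × {1,...,bₙ-1} is surjective; that is, for every tuple (j₁,...,jₙ) with 1 ≤ j_i ≤ b_i - 1 for each i, there exists x > 0 with d_{b_i}(x) = j_i for all i. -/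
open MeasureTheory Filter Topology UnitAddTorus

/-- Normalised Haar measure on the torus, as a product of the Haar measures of the circles. -/
noncomputable def torusHaar (n : ℕ) : Measure (UnitAddTorus (Fin n)) :=
  Measure.pi fun _ => AddCircle.haarAddCircle

instance (n : ℕ) : IsProbabilityMeasure (torusHaar n) := by
  unfold torusHaar; infer_instance

instance (n : ℕ) : (torusHaar n).IsOpenPosMeasure := by
  unfold torusHaar; infer_instance

/-- The linear flow on the torus with velocity `α`, started at the origin. -/
noncomputable def orbit {n : ℕ} (α : Fin n → ℝ) (t : ℝ) : UnitAddTorus (Fin n) :=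
  fun i => ((t * α i : ℝ) : UnitAddCircle)

lemma continuous_orbit {n : ℕ} (α : Fin n → ℝ) : Continuous (orbit α) := by
  refine continuous_pi fun i => ?_
  exact (AddCircle.continuous_mk' (1 : ℝ)).comp (by fun_prop)

lemma integral_fourier_eq_zero {k : ℤ} (hk : k ≠ 0) :
    ∫ z : UnitAddCircle, fourier k z ∂AddCircle.haarAddCircle = 0 :=
  integral_eq_zero_of_add_right_eq_neg (μ := AddCircle.haarAddCircle)
    (fourier_add_half_inv_index hk one_pos)

lemma integral_mFourier_eq_zero {n : ℕ} {m : Fin n → ℤ} (hm : m ≠ 0) :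
    ∫ z, mFourier m z ∂(torusHaar n) = 0 := by
  obtain ⟨i, hi⟩ := Function.ne_iff.mp hm
  have h := integral_fintype_prod_eq_prod (𝕜 := ℂ) (fun i (z : UnitAddCircle) => fourier (m i) z)
    (μ := fun _ : Fin n => AddCircle.haarAddCircle)
  refine Eq.trans h ?_
  exact Finset.prod_eq_zero (Finset.mem_univ i) (integral_fourier_eq_zero hi)

lemma mFourier_orbit {n : ℕ} (α : Fin n → ℝ) (m : Fin n → ℤ) (t : ℝ) :
    mFourier m (orbit α t)
      = Complex.exp ((2 * Real.pi * Complex.I * ((∑ i, m i * α i : ℝ) : ℂ)) * t) := by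
  have : mFourier m (orbit α t) = ∏ i, fourier (m i) ((t * α i : ℝ) : UnitAddCircle) := rfl
  rw [this]
  simp_rw [fourier_coe_apply]
  rw [← Complex.exp_sum]
  congr 1
  push_cast
  rw [Finset.mul_sum, Finset.sum_mul]
  refine Finset.sum_congr rfl fun i _ => ?_
  ring

lemma tendsto_average_exp {c : ℝ} (hc : c ≠ 0) :
    Tendsto (fun T : ℝ => (T : ℂ)⁻¹ * ∫ t in (0 : ℝ)..T,
      Complex.exp ((2 * Real.pi * Complex.I * (c : ℂ)) * t)) atTop (𝓝 0) := by
  have hd : (2 * Real.pi * Complex.I * (c : ℂ)) ≠ 0 := by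
    simp [hc, Real.pi_ne_zero]
  set d : ℂ := 2 * Real.pi * Complex.I * (c : ℂ) with hd_def
  have hlim : Tendsto (fun T : ℝ => T⁻¹ * (2 / ‖d‖)) atTop (𝓝 0) := by
    simpa using tendsto_inv_atTop_zero.mul_const (2 / ‖d‖)
  refine squeeze_zero_norm' ?_ hlim
  filter_upwards [eventually_gt_atTop 0] with T hT
  rw [integral_exp_mul_complex hd, norm_mul, norm_div, norm_inv, Complex.norm_real,
    Real.norm_of_nonneg hT.le]
  have h1 : ∀ s : ℝ, ‖Complex.exp (d * s)‖ = 1 := by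
    intro s
    rw [Complex.norm_exp]
    simp [hd_def]
  gcongr
  refine (norm_sub_le _ _).trans ?_
  rw [h1, h1]
  norm_num

/-- Weyl's criterion in one direction: along a flow with rationally independent velocities, time
averages of trigonometric polynomials converge to their space averages. -/
lemma tendsto_average_of_mem_span {n : ℕ} {α : Fin n → ℝ} (hα : LinearIndependent ℚ α)
    {p : C(UnitAddTorus (Fin n), ℂ)}
    (hp : p ∈ Submodule.span ℂ (Set.range (mFourier (d := Fin n)))) :
    Tendsto (fun T : ℝ => (T : ℂ)⁻¹ * ∫ t in (0 : ℝ)..T, p (orbit α t)) atTop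
      (𝓝 (∫ z, p z ∂(torusHaar n))) := by
  have hint : ∀ (q : C(UnitAddTorus (Fin n), ℂ)) (T : ℝ),
      IntervalIntegrable (fun t => q (orbit α t)) volume 0 T := fun q T =>
    (q.continuous.comp (continuous_orbit α)).intervalIntegrable _ _
  have hint' : ∀ q : C(UnitAddTorus (Fin n), ℂ), Integrable q (torusHaar n) := fun q =>
    q.continuous.integrable_of_hasCompactSupport (HasCompactSupport.of_compactSpace _)
  induction hp using Submodule.span_induction with
  | mem p hp =>
    obtain ⟨m, rfl⟩ := hp
    by_cases hm : m = 0
    · subst hm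
      simp only [mFourier_zero, ContinuousMap.one_apply, intervalIntegral.integral_const,
        integral_const, sub_zero]
      refine tendsto_const_nhds.congr' ?_
      filter_upwards [eventually_gt_atTop 0] with T hT
      have : (T : ℂ) ≠ 0 := by exact_mod_cast hT.ne'
      simp [this]
    · rw [integral_mFourier_eq_zero hm]
      simp_rw [mFourier_orbit]
      apply tendsto_average_exp
      intro h0
      apply hm
      funext i
      have := Fintype.linearIndependent_iff.mp hα (fun i => (m i : ℚ))
        (by simpa [Rat.smul_def] using h0) i
      exact_mod_cast this
  | zero => simp
  | add p q _ _ hp hq =>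
    simp only [ContinuousMap.add_apply]
    rw [integral_add (hint' p) (hint' q)]
    refine (hp.add hq).congr fun T => ?_
    rw [intervalIntegral.integral_add (hint p T) (hint q T), mul_add]
  | smul c p _ hp =>
    simp only [ContinuousMap.smul_apply, smul_eq_mul]
    rw [integral_const_mul]
    refine (hp.const_mul c).congr fun T => ?_
    rw [intervalIntegral.integral_const_mul]
    ring

/-- Kronecker's theorem in continuous time: a flow with rationally independent velocities visits
every nonempty open subset of the torus. -/
theorem exists_orbit_mem {n : ℕ} {α : Fin n → ℝ} (hα : LinearIndependent ℚ α)
    {U : Set (UnitAddTorus (Fin n))} (hU : IsOpen U) (hne : U.Nonempty) :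
    ∃ t, orbit α t ∈ U := by
  by_contra! hcon
  obtain ⟨z₀, hz₀⟩ := hne
  have hf_cont : Continuous fun z => Metric.infDist z Uᶜ := Metric.continuous_infDist_pt _
  have hpos : 0 < ∫ z, Metric.infDist z Uᶜ ∂(torusHaar n) := by
    refine hf_cont.integral_pos_of_hasCompactSupport_nonneg_nonzero (x := z₀)
      (HasCompactSupport.of_compactSpace _) (fun z => Metric.infDist_nonneg) ?_
    intro h
    have := (hU.isClosed_compl.mem_iff_infDist_zero ⟨orbit α 0, hcon 0⟩).mpr h
    exact this hz₀
  let f : C(UnitAddTorus (Fin n), ℂ) :=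
    ⟨fun z => (Metric.infDist z Uᶜ : ℂ), Complex.continuous_ofReal.comp hf_cont⟩
  set I := ∫ z, Metric.infDist z Uᶜ ∂(torusHaar n) with hI
  have hfI : ∫ z, f z ∂(torusHaar n) = (I : ℂ) := integral_ofReal
  have hf_orbit : ∀ t, f (orbit α t) = 0 := fun t => by
    have : Metric.infDist (orbit α t) Uᶜ = 0 := Metric.infDist_zero_of_mem (hcon t)
    simp [f, this]
  have hmem : f ∈ closure
      (Submodule.span ℂ (Set.range (mFourier (d := Fin n))) : Set C(UnitAddTorus (Fin n), ℂ)) := by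
    rw [← Submodule.topologicalClosure_coe, span_mFourier_closure_eq_top]
    trivial
  obtain ⟨p, hp, hfp⟩ := Metric.mem_closure_iff.mp hmem (I / 3) (by positivity)
  rw [dist_eq_norm] at hfp
  have hptw : ∀ z, ‖f z - p z‖ ≤ I / 3 := fun z =>
    ((f - p).norm_coe_le_norm z).trans hfp.le
  have hint' : ∀ q : C(UnitAddTorus (Fin n), ℂ), Integrable q (torusHaar n) := fun q =>
    q.continuous.integrable_of_hasCompactSupport (HasCompactSupport.of_compactSpace _)
  -- On the orbit `f` vanishes, so the time averages of `p`, and hence its mean, are small.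
  have hmean : ‖∫ z, p z ∂(torusHaar n)‖ ≤ I / 3 := by
    refine le_of_tendsto (tendsto_average_of_mem_span hα hp).norm ?_
    filter_upwards [eventually_gt_atTop 0] with T hT
    have h := intervalIntegral.norm_integral_le_of_norm_le_const (a := 0) (b := T)
      (f := fun t => p (orbit α t)) (C := I / 3) (fun t _ => by
        have := hptw (orbit α t)
        rwa [hf_orbit, zero_sub, norm_neg] at this)
    rw [sub_zero, abs_of_pos hT] at h
    rw [norm_mul, norm_inv, Complex.norm_real, Real.norm_of_nonneg hT.le, inv_mul_le_iff₀ hT]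
    linarith
  have hdiff : ‖(I : ℂ) - ∫ z, p z ∂(torusHaar n)‖ ≤ I / 3 := by
    rw [← hfI, ← integral_sub (hint' f) (hint' p)]
    have := norm_integral_le_of_norm_le_const (μ := torusHaar n) (f := fun z => f z - p z)
      (Eventually.of_forall hptw)
    simpa using this
  have htri := norm_sub_norm_le (I : ℂ) (∫ z, p z ∂(torusHaar n))
  rw [Complex.norm_real, Real.norm_of_nonneg hpos.le] at htri
  linarith

/-- The leading digit is `j` once `logb b x` lies in the open interval
`(logb b j, logb b (j + 1))` modulo an integer. -/
lemma leadingDigit_eq {b j : ℕ} (hb : 3 ≤ b) (hj : 1 ≤ j) (hjb : j ≤ b - 1) {x s : ℝ}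
    (h1 : Real.logb b j < s) (h2 : s < Real.logb b (j + 1)) (k : ℤ)
    (hk : Real.logb b x - s = k) : leadingDigit b x = j := by
  have hb1 : (1 : ℝ) < b := by exact_mod_cast (by omega : 1 < b)
  have hj0 : (1 : ℝ) ≤ j := by exact_mod_cast hj
  have hjb' : (j : ℝ) + 1 ≤ b := by exact_mod_cast (by omega : j + 1 ≤ b)
  have hs0 : 0 ≤ s := (Real.logb_nonneg hb1 hj0).trans h1.le
  have hs1 : s < 1 := h2.trans_le <| by
    exact (Real.logb_le_logb_of_le hb1 (by positivity) hjb').trans_eq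
      (Real.logb_self_eq_one hb1)
  have hfr : Int.fract (Real.logb b x) = s := Int.fract_eq_iff.mpr ⟨hs0, hs1, k, hk⟩
  unfold leadingDigit
  rw [hfr, Nat.floor_eq_iff (by positivity)]
  exact ⟨((Real.logb_lt_iff_lt_rpow hb1 (by positivity)).mp h1).le,
    (Real.lt_logb_iff_rpow_lt hb1 (by positivity)).mp h2⟩

theorem stmt_12 (n : ℕ) (hn : 2 ≤ n) (b : Fin n → ℕ) (hb : ∀ i, 3 ≤ b i)
    (hinj : Function.Injective b)
    (hind : LinearIndependent ℚ (fun i => 1 / Real.log (b i))) :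
    ∀ j : Fin n → ℕ, (∀ i, 1 ≤ j i ∧ j i ≤ b i - 1) →
      ∃ x : ℝ, 0 < x ∧ ∀ i, leadingDigit (b i) x = j i := by
  intro j hj
  let A : Fin n → Set ℝ := fun i =>
    Set.Ioo (Real.logb (b i) (j i)) (Real.logb (b i) (j i + 1))
  let U : Set (UnitAddTorus (Fin n)) :=
    Set.univ.pi fun i => Set.image ((↑) : ℝ → UnitAddCircle) (A i)
  have hU : IsOpen U :=
    isOpen_set_pi Set.finite_univ fun i _ => QuotientAddGroup.isOpenMap_coe _ isOpen_Ioo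
  have hne : U.Nonempty := by
    refine Set.univ_pi_nonempty_iff.mpr fun i => (Set.nonempty_Ioo.mpr ?_).image _
    have hb1 : (1 : ℝ) < b i := by
      have := hb i
      exact_mod_cast (by omega : 1 < b i)
    have hj0 : (0 : ℝ) < j i := by exact_mod_cast (hj i).1
    exact Real.logb_lt_logb hb1 hj0 (by linarith)
  obtain ⟨t, ht⟩ := exists_orbit_mem hind hU hne
  refine ⟨Real.exp t, Real.exp_pos t, fun i => ?_⟩
  obtain ⟨s, hs, hst⟩ := ht i (Set.mem_univ i)
  have hst' : ((t * (1 / Real.log (b i)) : ℝ) : UnitAddCircle) = (s : UnitAddCircle) := hst.symm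
  rw [← sub_eq_zero, ← AddCircle.coe_sub, AddCircle.coe_eq_zero_iff] at hst'
  obtain ⟨k, hk⟩ := hst'
  refine leadingDigit_eq (hb i) (hj i).1 (hj i).2 hs.1 hs.2 k ?_
  rw [Real.logb, Real.log_exp, div_eq_mul_one_div, ← hk]
  simp
end

section
/- Let n ≥ 2 and let B = (b₁,...,bₙ) have distinct integer entries ≥ 3 such that no pair of numbers among ln b₁,...,ln bₙ is rationally dependent, and let p₁,...,pₘ be the distinct primes dividing b₁⋯bₙ. If ln p₁,...,ln pₘ are algebraically independent over ℚ, then d_B : ℝ₊ → {1,...,b₁-1} × ⋯ × {1,...,bₙ-1}, d_B(x) := (d_{b₁}(x),...,d_{bₙ}(x)), is surjective. -/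
open MeasureTheory TopologicalSpace

/-! ### Kronecker's theorem for lines in the torus -/

/-- A nontrivial frequency is not constant along the line `t ↦ t • a` when `a` has
rationally independent entries: at `t = 1 / (2 ∑ kᵢ aᵢ)` the character takes the value `-1`. -/
lemma exists_mFourier_line_ne_one {n : ℕ} (a : Fin n → ℝ)
    (ha : ∀ k : Fin n → ℤ, ∑ i, (k i : ℝ) * a i = 0 → k = 0) (k : Fin n → ℤ) (hk : k ≠ 0) :
    ∃ t : ℝ, UnitAddTorus.mFourier k (fun i => ((t * a i : ℝ) : UnitAddCircle)) ≠ 1 := by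
  have hs : ∑ i, (k i : ℝ) * a i ≠ 0 := fun h => hk (ha k h)
  set s := ∑ i, (k i : ℝ) * a i with hsdef
  refine ⟨1 / (2 * s), ?_⟩
  have : UnitAddTorus.mFourier k (fun i => ((1 / (2 * s) * a i : ℝ) : UnitAddCircle))
      = Complex.exp (Real.pi * Complex.I) := by
    simp only [UnitAddTorus.mFourier, ContinuousMap.coe_mk, fourier_coe_apply]
    rw [← Complex.exp_sum]
    congr 1
    have h1 : ∀ i, 2 * (Real.pi : ℂ) * Complex.I * (k i : ℂ) * ((1 / (2 * s) * a i : ℝ) : ℂ)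
        / ((1 : ℝ) : ℂ) = (Real.pi * Complex.I / (s : ℂ)) * (((k i : ℝ) * a i : ℝ) : ℂ) := by
      intro i
      have : (s : ℂ) ≠ 0 := by exact_mod_cast hs
      push_cast
      field_simp
    rw [Finset.sum_congr rfl fun i _ => h1 i, ← Finset.mul_sum, ← Complex.ofReal_sum, ← hsdef]
    have : (s : ℂ) ≠ 0 := by exact_mod_cast hs
    field_simp
  rw [this, Complex.exp_pi_mul_I]
  norm_num

/-- Characters of the torus pulled back to a compact group integrate to `0` or `1` against the
normalized Haar measure: translating by a point where the character is not `1` multiplies the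
integral by that value. -/
lemma integral_mFourier_comp {n : ℕ} {H : Type*} [AddCommGroup H] [TopologicalSpace H]
    [IsTopologicalAddGroup H] [CompactSpace H] [MeasurableSpace H] [BorelSpace H]
    (f : H →+ UnitAddTorus (Fin n)) (k : Fin n → ℤ)
    (hk : k ≠ 0 → ∃ h : H, UnitAddTorus.mFourier k (f h) ≠ 1) :
    ∫ x, UnitAddTorus.mFourier k (f x) ∂(Measure.addHaarMeasure (⊤ : PositiveCompacts H))
      = if k = 0 then 1 else 0 := by
  split_ifs with h0
  · subst h0
    have : (Measure.addHaarMeasure (⊤ : PositiveCompacts H)) Set.univ = 1 := by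
      have := Measure.addHaarMeasure_self (K₀ := (⊤ : PositiveCompacts H))
      simpa using this
    simp [UnitAddTorus.mFourier_zero, Measure.real, this]
  · obtain ⟨h, hh⟩ := hk h0
    have h1 := integral_add_right_eq_self (μ := Measure.addHaarMeasure (⊤ : PositiveCompacts H))
      (fun x => UnitAddTorus.mFourier k (f x)) h
    have h2 : ∀ x, UnitAddTorus.mFourier k (f (x + h))
        = UnitAddTorus.mFourier k (f x) * UnitAddTorus.mFourier k (f h) := by
      intro x
      simp only [UnitAddTorus.mFourier, ContinuousMap.coe_mk, map_add, Pi.add_apply,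
        fourier_apply, smul_add, AddCircle.toCircle_add, Circle.coe_mul, Finset.prod_mul_distrib]
    simp only [h2] at h1
    rw [integral_mul_const] at h1
    have h3 := mul_eq_left₀ (M₀ := ℂ) (a := ∫ x, UnitAddTorus.mFourier k (f x)
      ∂(Measure.addHaarMeasure (⊤ : PositiveCompacts H))) (b := UnitAddTorus.mFourier k (f h))
    by_contra hne
    exact hh ((h3 hne).1 h1)

lemma continuous_integral_continuousMap {X : Type*} [TopologicalSpace X] [CompactSpace X]
    [SecondCountableTopology X] [MeasurableSpace X] [BorelSpace X] (ρ : Measure X)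
    [IsFiniteMeasure ρ] : Continuous fun g : C(X, ℂ) => ∫ x, g x ∂ρ := by
  have h := (continuous_integral (μ := ρ) (G := ℂ)).comp
    (ContinuousMap.toLp (E := ℂ) 1 ρ ℂ).continuous
  refine h.congr fun g => ?_
  exact integral_congr_ae (ContinuousMap.coeFn_toLp ρ g)

/-- The line `t ↦ t • a` in the torus `(ℝ/ℤ)ⁿ`, as a homomorphism. -/
noncomputable def torusLine {n : ℕ} (a : Fin n → ℝ) : ℝ →+ UnitAddTorus (Fin n) where
  toFun t := fun i => ((t * a i : ℝ) : UnitAddCircle)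
  map_zero' := by ext i; simp
  map_add' s t := by ext i; simp [add_mul]

/-- Kronecker's theorem in its continuous form. The Haar measures of the whole torus and of the
closure `H` of the line have the same Fourier coefficients, so they agree on all continuous
functions; a nonnegative bump function vanishing on `H` must then vanish. -/
lemma dense_torusLine {n : ℕ} (a : Fin n → ℝ)
    (ha : ∀ k : Fin n → ℤ, ∑ i, (k i : ℝ) * a i = 0 → k = 0) :
    Dense (Set.range (torusLine a)) := by
  set H : AddSubgroup (UnitAddTorus (Fin n)) := (torusLine a).range.topologicalClosure with hH
  have hHcl : IsClosed (H : Set (UnitAddTorus (Fin n))) :=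
    AddSubgroup.isClosed_topologicalClosure _
  have hmem : ∀ t, torusLine a t ∈ H := fun t =>
    AddSubgroup.le_topologicalClosure _ ⟨t, rfl⟩
  have : CompactSpace H := isCompact_iff_compactSpace.mp hHcl.isCompact
  let ν : Measure H := Measure.addHaarMeasure ⊤
  let μ : Measure (UnitAddTorus (Fin n)) := Measure.addHaarMeasure ⊤
  have hint : ∀ {X : Type} [TopologicalSpace X] [CompactSpace X] [MeasurableSpace X]
      [BorelSpace X] (ρ : Measure X) [IsFiniteMeasureOnCompacts ρ] (g : C(X, ℂ)),
      Integrable g ρ := fun ρ _ g =>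
    g.continuous.integrable_of_hasCompactSupport (HasCompactSupport.of_compactSpace _)
  let ι : C(H, UnitAddTorus (Fin n)) := ⟨Subtype.val, continuous_subtype_val⟩
  have key : ∀ g : C(UnitAddTorus (Fin n), ℂ), ∫ x, g x ∂μ = ∫ x : H, g x ∂ν := by
    have hclosed : IsClosed {g : C(UnitAddTorus (Fin n), ℂ) |
        ∫ x, g x ∂μ = ∫ x : H, g x ∂ν} := by
      exact isClosed_eq (continuous_integral_continuousMap μ)
        ((continuous_integral_continuousMap ν).comp (ContinuousMap.continuous_precomp ι))
    have hspan : ∀ g ∈ Submodule.span ℂ (Set.range (UnitAddTorus.mFourier (d := Fin n))),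
        ∫ x, g x ∂μ = ∫ x : H, g x ∂ν := by
      intro g hg
      induction hg using Submodule.span_induction with
      | mem g hg =>
        obtain ⟨k, rfl⟩ := hg
        have e1 := integral_mFourier_comp (AddMonoidHom.id (UnitAddTorus (Fin n))) k
          (fun hk => by
            obtain ⟨t, ht⟩ := exists_mFourier_line_ne_one a ha k hk
            exact ⟨_, ht⟩)
        have e2 := integral_mFourier_comp H.subtype k
          (fun hk => by
            obtain ⟨t, ht⟩ := exists_mFourier_line_ne_one a ha k hk
            exact ⟨⟨torusLine a t, hmem t⟩, ht⟩)
        exact e1.trans e2.symm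
      | zero => simp
      | add f g _ _ hf hg =>
        have e1 := integral_add (hint μ f) (hint μ g)
        have e2 := integral_add (hint ν (f.comp ι)) (hint ν (g.comp ι))
        simp only [ContinuousMap.add_apply]
        rw [e1, hf, hg]
        exact e2.symm
      | smul c f _ hf =>
        simp only [ContinuousMap.smul_apply]
        rw [integral_smul, integral_smul, hf]
    intro g
    have hg : g ∈ (Submodule.span ℂ
        (Set.range (UnitAddTorus.mFourier (d := Fin n)))).topologicalClosure := by
      rw [UnitAddTorus.span_mFourier_closure_eq_top]; trivial
    exact closure_minimal hspan hclosed hg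
  suffices h : ∀ y, y ∈ H by
    intro y
    exact h y
  by_contra! hy
  obtain ⟨y, hy⟩ := hy
  obtain ⟨f, hf0, hf1, hf⟩ := exists_continuous_zero_one_of_isClosed hHcl
    (isClosed_singleton (x := y)) (Set.disjoint_singleton_right.2 hy)
  have hk := key ⟨fun x => ((f x : ℝ) : ℂ), by fun_prop⟩
  have hz : ∀ x : H, f x = 0 := fun x => hf0 x.2
  simp only [ContinuousMap.coe_mk, hz, Complex.ofReal_zero, integral_zero] at hk
  rw [integral_complex_ofReal] at hk
  have hpos : 0 < ∫ x, f x ∂μ :=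
    f.continuous.integral_pos_of_hasCompactSupport_nonneg_nonzero
      (HasCompactSupport.of_compactSpace _) (fun x => (hf x).1) (x := y)
      (by rw [hf1 rfl]; norm_num)
  exact hpos.ne' (by exact_mod_cast hk)

/-! ### Rational independence of the reciprocals of the logarithms -/

/-- Reciprocals of pairwise non-proportional rational linear forms in algebraically independent
numbers are rationally independent. After clearing denominators a relation
`∑ cᵢ / Lᵢ = 0` is a polynomial identity `∑ cᵢ ∏_{j ≠ i} Lⱼ = 0`; evaluating it at a rational point
of the hyperplane `Lᵢ = 0` lying on no other hyperplane `Lⱼ = 0` gives `cᵢ = 0`. -/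
lemma reciprocal_forms_independent {n m : ℕ} (y : Fin m → ℝ) (hy : AlgebraicIndependent ℚ y)
    (v : Fin n → Fin m → ℚ) (hv : ∀ i j, i ≠ j → v j ∉ Submodule.span ℚ {v i})
    (h0 : ∀ i, ∑ k, (v i k : ℝ) * y k ≠ 0)
    (c : Fin n → ℤ) (hc : ∑ i, (c i : ℝ) * (∑ k, (v i k : ℝ) * y k)⁻¹ = 0) : c = 0 := by
  let L : Fin n → MvPolynomial (Fin m) ℚ := fun i => ∑ k, MvPolynomial.C (v i k) * MvPolynomial.X k
  let P : MvPolynomial (Fin m) ℚ := ∑ i, (c i : MvPolynomial (Fin m) ℚ) * ∏ j ∈ Finset.univ.erase i, L j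
  have hL : ∀ i, MvPolynomial.aeval y (L i) = ∑ k, (v i k : ℝ) * y k := by
    intro i
    simp [L]
  have hP : P = 0 := by
    apply (algebraicIndependent_iff.1 hy) P
    simp only [P, map_sum, map_mul, map_prod, hL, map_intCast]
    calc _ = ∑ i, (∏ j, ∑ k, (v j k : ℝ) * y k) * ((c i : ℝ) * (∑ k, (v i k : ℝ) * y k)⁻¹) := by
          refine Finset.sum_congr rfl fun i _ => ?_
          rw [← Finset.mul_prod_erase Finset.univ _ (Finset.mem_univ i)]
          field_simp [h0 i]
      _ = 0 := by rw [← Finset.mul_sum, hc, mul_zero]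
  funext i
  let V := (Fin m → ℚ) ⧸ Submodule.span ℚ {v i}
  obtain ⟨f, hf⟩ := Module.exists_dual_forall_apply_ne_zero (K := ℚ) (M := V)
    (fun j : {j : Fin n // i ≠ j} => (Submodule.span ℚ {v i}).mkQ (v j))
    (fun j hj => hv i j j.2 ((Submodule.Quotient.mk_eq_zero _).1 hj))
  let g : (Fin m → ℚ) →ₗ[ℚ] ℚ := f ∘ₗ (Submodule.span ℚ {v i}).mkQ
  have hgL : ∀ j, MvPolynomial.eval (fun k => g (Pi.single k 1)) (L j) = g (v j) := by
    intro j
    conv_rhs => rw [← Finset.univ_sum_single (v j)]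
    simp only [L, map_sum, map_mul, MvPolynomial.eval_C, MvPolynomial.eval_X]
    refine Finset.sum_congr rfl fun k _ => ?_
    have : (Pi.single k (v j k) : Fin m → ℚ) = v j k • Pi.single k 1 := by
      rw [← Pi.single_smul]; simp
    rw [this, map_smul, smul_eq_mul]
  have hgi : g (v i) = 0 := by
    have : (Submodule.span ℚ {v i}).mkQ (v i) = 0 := by
      simp [Submodule.mem_span_singleton_self]
    simp only [g, LinearMap.comp_apply, this, map_zero]
  have he := congrArg (MvPolynomial.eval (fun k => g (Pi.single k 1))) hP
  simp only [P, map_sum, map_mul, map_prod, hgL, map_intCast, map_zero] at he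
  rw [Finset.sum_eq_single i] at he
  · rcases mul_eq_zero.1 he with h | h
    · simpa using h
    · exfalso
      obtain ⟨j, hj, hj0⟩ := Finset.prod_eq_zero_iff.1 h
      exact hf ⟨j, (Finset.ne_of_mem_erase hj).symm⟩ hj0
  · intro j _ hji
    rw [Finset.prod_eq_zero (Finset.mem_erase.2 ⟨hji.symm, Finset.mem_univ i⟩) hgi, mul_zero]
  · simp

lemma log_eq_sum_factorization {m : ℕ} (p : Fin m → ℕ) (hpinj : Function.Injective p)
    (N : ℕ) (hN : N ≠ 0) (hdiv : ∀ q : ℕ, q.Prime → q ∣ N → ∃ k, p k = q) :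
    Real.log N = ∑ k, ((N.factorization (p k) : ℚ) : ℝ) * Real.log (p k) := by
  have h1 : ∏ k, p k ^ N.factorization (p k) = N := by
    conv_rhs => rw [← Nat.prod_factorization_pow_eq_self hN]
    rw [Finsupp.prod_of_support_subset _ (s := Finset.univ.image p) _ _ (by simp),
      Finset.prod_image (fun _ _ _ _ h => hpinj h)]
    intro q hq
    have hq' := Nat.support_factorization N ▸ hq
    obtain ⟨k, hk⟩ := hdiv q (Nat.prime_of_mem_primeFactors hq') (Nat.dvd_of_mem_primeFactors hq')
    exact Finset.mem_image.2 ⟨k, Finset.mem_univ _, hk⟩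
  have hne : ∀ k, p k ^ N.factorization (p k) ≠ 0 := fun k hk =>
    hN (by rw [← h1]; exact Finset.prod_eq_zero (Finset.mem_univ k) hk)
  conv_lhs => rw [← h1]
  push_cast
  rw [Real.log_prod (fun k _ => by exact_mod_cast hne k)]
  simp

/-! ### Leading digits -/

/-- The digit is `j` as soon as `log_b x` lies, modulo `1`, strictly between `log_b j` and
`log_b (j+1)`. -/
lemma leadingDigit_eq_s13 (b j : ℕ) (hb : 3 ≤ b) (hj : 1 ≤ j ∧ j ≤ b - 1) (x y : ℝ)
    (hy : y ∈ Set.Ioo (Real.logb b j) (Real.logb b (j + 1)))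
    (hxy : (y : UnitAddCircle) = (Real.logb b x : ℝ)) : leadingDigit b x = j := by
  have hb1 : (1 : ℝ) < b := by exact_mod_cast (by omega : 1 < b)
  have hj0 : (0 : ℝ) < j := by exact_mod_cast hj.1
  have hjb : (j : ℝ) + 1 ≤ b := by exact_mod_cast (by omega : j + 1 ≤ b)
  have hy0 : 0 ≤ y := (Real.logb_nonneg hb1 (by exact_mod_cast hj.1)).trans hy.1.le
  have hy1 : y < 1 := hy.2.trans_le <| by
    calc Real.logb b (j + 1) ≤ Real.logb b b :=
          Real.logb_le_logb_of_le hb1 (by positivity) hjb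
      _ = 1 := Real.logb_self_eq_one hb1
  have hfr : Int.fract (Real.logb b x) = y := by
    have h0 : ((Real.logb b x - y : ℝ) : UnitAddCircle) = 0 := by
      rw [AddCircle.coe_sub, hxy, sub_self]
    obtain ⟨z, hz⟩ := (AddCircle.coe_eq_zero_iff 1).1 h0
    exact Int.fract_eq_iff.2 ⟨hy0, hy1, z, by simpa using hz.symm⟩
  rw [leadingDigit, hfr, Nat.floor_eq_iff (by positivity)]
  constructor
  · rw [← Real.logb_le_iff_le_rpow hb1 hj0]; exact hy.1.le
  · rw [← Real.lt_logb_iff_rpow_lt hb1 (by positivity)]; exact hy.2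

theorem stmt_13 (n : ℕ) (hn : 2 ≤ n) (b : Fin n → ℕ) (hb : ∀ i, 3 ≤ b i)
    (hinj : Function.Injective b)
    (hpair : ∀ i j : Fin n, i ≠ j → LinearIndependent ℚ ![Real.log (b i), Real.log (b j)])
    (m : ℕ) (p : Fin m → ℕ) (hp : ∀ k, (p k).Prime) (hpinj : Function.Injective p)
    (hdiv : ∀ q : ℕ, q.Prime → ((q ∣ ∏ i, b i) ↔ ∃ k, p k = q))
    (halg : AlgebraicIndependent ℚ (fun k => Real.log (p k))) :
    ∀ j : Fin n → ℕ, (∀ i, 1 ≤ j i ∧ j i ≤ b i - 1) →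
      ∃ x : ℝ, 0 < x ∧ ∀ i, leadingDigit (b i) x = j i := by
  intro j hj
  let v : Fin n → Fin m → ℚ := fun i k => ((b i).factorization (p k) : ℚ)
  have hb1 : ∀ i, (1 : ℝ) < b i := fun i => by exact_mod_cast (by have := hb i; omega : 1 < b i)
  have hlog : ∀ i, Real.log (b i) = ∑ k, (v i k : ℝ) * Real.log (p k) := fun i =>
    log_eq_sum_factorization p hpinj (b i) (by have := hb i; omega)
      (fun q hq hqi => (hdiv q hq).1 (hqi.trans (Finset.dvd_prod_of_mem b (Finset.mem_univ i))))
  have hlog0 : ∀ i, Real.log (b i) ≠ 0 := fun i => (Real.log_pos (hb1 i)).ne'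
  have hv : ∀ i l, i ≠ l → v l ∉ Submodule.span ℚ {v i} := by
    intro i l hil hmem
    obtain ⟨c, hc⟩ := Submodule.mem_span_singleton.1 hmem
    have h1 : c • Real.log (b i) + (-1 : ℚ) • Real.log (b l) = 0 := by
      rw [hlog i, hlog l, ← hc, Finset.smul_sum, Finset.smul_sum, ← Finset.sum_add_distrib]
      refine Finset.sum_eq_zero fun k _ => ?_
      simp only [Rat.smul_def, Pi.smul_apply, smul_eq_mul]
      push_cast
      ring
    have := (LinearIndependent.pair_iff.1 (hpair i l hil) c (-1) h1).2
    norm_num at this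
  have hind : ∀ c : Fin n → ℤ, ∑ i, (c i : ℝ) * (Real.log (b i))⁻¹ = 0 → c = 0 := by
    intro c hc
    refine reciprocal_forms_independent _ halg v hv (fun i => ?_) c ?_
    · rw [← hlog i]; exact hlog0 i
    · simpa only [← hlog] using hc
  let U : Set (UnitAddTorus (Fin n)) := Set.univ.pi fun i =>
    ((↑) : ℝ → UnitAddCircle) '' Set.Ioo (Real.logb (b i) (j i)) (Real.logb (b i) (j i + 1))
  have hU : IsOpen U := isOpen_set_pi Set.finite_univ fun i _ =>
    QuotientAddGroup.isOpenMap_coe _ isOpen_Ioo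
  have hUne : U.Nonempty := Set.univ_pi_nonempty_iff.2 fun i => by
    refine (Set.nonempty_Ioo.2 ?_).image _
    have hj0 : (0 : ℝ) < j i := by exact_mod_cast (hj i).1
    exact Real.logb_lt_logb (hb1 i) hj0 (by linarith)
  obtain ⟨_, hmemU, t, rfl⟩ := (dense_torusLine _ hind).inter_open_nonempty U hU hUne
  refine ⟨Real.exp t, Real.exp_pos t, fun i => ?_⟩
  obtain ⟨y, hy, hyt⟩ := hmemU i (Set.mem_univ i)
  refine leadingDigit_eq_s13 (b i) (j i) (hb i) (hj i) _ y hy ?_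
  rw [hyt, Real.logb, Real.log_exp]
  rfl
end
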